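/- Let θ : ℕ → {0,1} with θ(0) = 0, let μ₀, μ₁ ≥ 1, 0 < ω₀ < 1 ≤ ω₁, T > 0, and κ_F, ρ_F, κ*, ρ* ≥ 0, and let W : ℕ → ℝ be a nonnegative sequence such that for every k ∈ ℕ: W(k+1) ≤ ω_{θ(k)}·W(k) whenever θ(k+1) = θ(k), and W(k+1) ≤ μ_{θ(k)}·ω_{θ(k)}·W(k) whenever θ(k+1) ≠ θ(k). Suppose that for all k ∈ ℕ, S(k) ≤ κ_F + ρ_F·kT and χ(k) ≤ (κ* + ρ*·kT)/T, where χ(k) := #{j < k : θ(j) = 1} and S(k) := #{j < k : θ(j) = 0 and θ(j+1) = 1}. Then for all k ∈ ℕ, W(k) ≤ c_W · ω^k · W(0), where c_W := (μ₀μ₁)^{κ_F}·(ω₁/ω₀)^{κ*/T} and ω := (μ₀μ₁)^{ρ_F T}·ω₀^{1−ρ*}·ω₁^{ρ*} (real powers). -/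

import Mathlib

/-- `χ(k)`: the number of indices `j < k` with `θ j = 1` (packet-loss steps). -/
def lossCount (θ : ℕ → ℕ) (k : ℕ) : ℕ :=
  ((Finset.range k).filter fun j => θ j = 1).card

/-- `S(k)`: the number of indices `j < k` with `θ j = 0` and `θ (j+1) = 1`
(switches from the nominal mode to the packet-loss mode). -/
def switchCount (θ : ℕ → ℕ) (k : ℕ) : ℕ :=
  ((Finset.range k).filter fun j => θ j = 0 ∧ θ (j + 1) = 1).card

/-!
Each step multiplies `W` by at most a gain, so `W k` is at most `W 0` times a product of gains.
In that product the factor `μ₀` occurs once per switch `0 → 1`, the factor `μ₁` once per switch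
`1 → 0`, and every loss step trades a factor `ω₀` for `ω₁`. A binary signal starting at `0` has at
most as many switches `1 → 0` as `0 → 1`, so the product is at most
`(μ₀ μ₁) ^ S(k) * ω₀ ^ k * (ω₁ / ω₀) ^ χ(k)`. The bases `μ₀ μ₁` and `ω₁ / ω₀` are at least `1`,
hence the affine bounds on `S` and `χ` may be inserted as exponents.
-/

theorem le_prod_range_mul_of_succ_le_mul {R : Type*} [CommSemiring R] [PartialOrder R]
    [IsOrderedRing R] {u a : ℕ → R} (ha : ∀ k, 0 ≤ a k) (hu : ∀ k, u (k + 1) ≤ a k * u k) (k : ℕ) :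
    u k ≤ (∏ j ∈ Finset.range k, a j) * u 0 := by
  induction k with
  | zero => simp
  | succ k ih =>
    calc u (k + 1) ≤ a k * u k := hu k
      _ ≤ a k * ((∏ j ∈ Finset.range k, a j) * u 0) := mul_le_mul_of_nonneg_left ih (ha k)
      _ = (∏ j ∈ Finset.range (k + 1), a j) * u 0 := by rw [Finset.prod_range_succ]; ring

theorem prod_ite_one_eq_pow_card {ι M : Type*} [CommMonoid M] (s : Finset ι) (p : ι → Prop)
    [DecidablePred p] (c : M) :
    (∏ i ∈ s, if p i then c else 1) = c ^ (s.filter p).card := by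
  rw [← Finset.prod_filter, Finset.prod_const]

theorem pow_le_rpow_mul_rpow_pow {b κ ρ : ℝ} {n k : ℕ} (hb : 1 ≤ b) (hn : (n : ℝ) ≤ κ + ρ * k) :
    b ^ n ≤ b ^ κ * (b ^ ρ) ^ k := by
  have hb₀ : 0 < b := zero_lt_one.trans_le hb
  calc b ^ n = b ^ (n : ℝ) := (Real.rpow_natCast b n).symm
    _ ≤ b ^ (κ + ρ * k) := Real.rpow_le_rpow_of_exponent_le hb hn
    _ = b ^ κ * (b ^ ρ) ^ k := by rw [Real.rpow_add hb₀, Real.rpow_mul_natCast hb₀.le]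

theorem mul_div_rpow_eq_rpow_one_sub_mul_rpow {x y : ℝ} (hx : 0 < x) (hy : 0 ≤ y) (ρ : ℝ) :
    x * (y / x) ^ ρ = x ^ (1 - ρ) * y ^ ρ := by
  rw [Real.div_rpow hy hx.le, Real.rpow_sub hx, Real.rpow_one]
  ring

/-- The number of indices `j < k` with `θ j = 1` and `θ (j + 1) = 0`: the switches back to the
nominal mode, each of which costs a factor `μ₁`. -/
def recoveryCount (θ : ℕ → ℕ) (k : ℕ) : ℕ :=
  ((Finset.range k).filter fun j => θ j = 1 ∧ θ (j + 1) = 0).card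

/-- The factor by which the sequence may grow from step `k` to step `k + 1`: the rate `ω` of the
current mode, multiplied by the jump `μ` of that mode when the mode changes. As in the recursion,
every nonzero value of `θ k` is read as the loss mode. -/
def stepGain {K : Type*} [MulOneClass K] (θ : ℕ → ℕ) (μ₀ μ₁ ω₀ ω₁ : K) (k : ℕ) : K :=
  (if θ (k + 1) = θ k then 1 else if θ k = 0 then μ₀ else μ₁) * (if θ k = 0 then ω₀ else ω₁)

section BinarySignal

variable {θ : ℕ → ℕ}

theorem recoveryCount_add_eq_add_switchCount (hθ : ∀ k, θ k = 0 ∨ θ k = 1) (k : ℕ) :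
    recoveryCount θ k + θ k = θ 0 + switchCount θ k := by
  induction k with
  | zero => simp [recoveryCount, switchCount]
  | succ k ih =>
    have hstep : (if θ k = 1 ∧ θ (k + 1) = 0 then 1 else 0) + θ (k + 1) =
        θ k + if θ k = 0 ∧ θ (k + 1) = 1 then 1 else 0 := by
      rcases hθ k with h | h <;> rcases hθ (k + 1) with h' | h' <;> simp [h, h']
    simp only [recoveryCount, switchCount, Finset.card_filter, Finset.sum_range_succ] at ih ⊢
    omega

theorem recoveryCount_le_switchCount (hθ : ∀ k, θ k = 0 ∨ θ k = 1) (hθ0 : θ 0 = 0) (k : ℕ) :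
    recoveryCount θ k ≤ switchCount θ k := by
  have := recoveryCount_add_eq_add_switchCount hθ k
  omega

variable {K : Type*} [Field K] {μ₀ μ₁ ω₀ ω₁ : K}

theorem stepGain_eq_mul_ite (hθ : ∀ k, θ k = 0 ∨ θ k = 1) (hω₀ : ω₀ ≠ 0) (k : ℕ) :
    stepGain θ μ₀ μ₁ ω₀ ω₁ k =
      (if θ k = 0 ∧ θ (k + 1) = 1 then μ₀ else 1) * (if θ k = 1 ∧ θ (k + 1) = 0 then μ₁ else 1) *
        (ω₀ * if θ k = 1 then ω₁ / ω₀ else 1) := by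
  rcases hθ k with h | h <;> rcases hθ (k + 1) with h' | h' <;>
    simp [stepGain, h, h', mul_div_cancel₀ _ hω₀]

theorem prod_range_stepGain (hθ : ∀ k, θ k = 0 ∨ θ k = 1) (hω₀ : ω₀ ≠ 0) (k : ℕ) :
    ∏ j ∈ Finset.range k, stepGain θ μ₀ μ₁ ω₀ ω₁ j =
      μ₀ ^ switchCount θ k * μ₁ ^ recoveryCount θ k *
        (ω₀ ^ k * (ω₁ / ω₀) ^ lossCount θ k) := by
  simp only [stepGain_eq_mul_ite hθ hω₀, Finset.prod_mul_distrib, prod_ite_one_eq_pow_card,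
    Finset.prod_const, Finset.card_range, switchCount, recoveryCount, lossCount]

variable [LinearOrder K] [IsStrictOrderedRing K]

theorem prod_range_stepGain_le (hθ : ∀ k, θ k = 0 ∨ θ k = 1) (hθ0 : θ 0 = 0)
    (hμ₀ : 0 ≤ μ₀) (hμ₁ : 1 ≤ μ₁) (hω₀ : 0 < ω₀) (hω₁ : 0 ≤ ω₁) (k : ℕ) :
    ∏ j ∈ Finset.range k, stepGain θ μ₀ μ₁ ω₀ ω₁ j ≤
      (μ₀ * μ₁) ^ switchCount θ k * (ω₀ ^ k * (ω₁ / ω₀) ^ lossCount θ k) := by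
  rw [prod_range_stepGain hθ hω₀.ne', mul_pow]
  gcongr
  exact recoveryCount_le_switchCount hθ hθ0 k

theorem stepGain_nonneg (hμ₀ : 0 ≤ μ₀) (hμ₁ : 0 ≤ μ₁) (hω₀ : 0 ≤ ω₀) (hω₁ : 0 ≤ ω₁) (k : ℕ) :
    0 ≤ stepGain θ μ₀ μ₁ ω₀ ω₁ k := by
  unfold stepGain
  split_ifs <;> positivity

theorem le_pow_switchCount_mul_pow_lossCount (hθ : ∀ k, θ k = 0 ∨ θ k = 1) (hθ0 : θ 0 = 0)
    (hμ₀ : 0 ≤ μ₀) (hμ₁ : 1 ≤ μ₁) (hω₀ : 0 < ω₀) (hω₁ : 0 ≤ ω₁) {W : ℕ → K} (hW0 : 0 ≤ W 0)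
    (hW : ∀ k, W (k + 1) ≤ stepGain θ μ₀ μ₁ ω₀ ω₁ k * W k) (k : ℕ) :
    W k ≤ (μ₀ * μ₁) ^ switchCount θ k * (ω₀ ^ k * (ω₁ / ω₀) ^ lossCount θ k) * W 0 := by
  have hgain := stepGain_nonneg (θ := θ) hμ₀ (zero_le_one.trans hμ₁) hω₀.le hω₁
  exact (le_prod_range_mul_of_succ_le_mul hgain hW k).trans <|
    mul_le_mul_of_nonneg_right (prod_range_stepGain_le hθ hθ0 hμ₀ hμ₁ hω₀ hω₁ k) hW0

end BinarySignal

theorem pow_mul_pow_le_mul_rpow_pow {m x y κ ρ κ' ρ' : ℝ} {s l k : ℕ} (hm : 1 ≤ m) (hx : 0 < x)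
    (hxy : x ≤ y) (hs : (s : ℝ) ≤ κ + ρ * k) (hl : (l : ℝ) ≤ κ' + ρ' * k) :
    m ^ s * (x ^ k * (y / x) ^ l) ≤
      m ^ κ * (y / x) ^ κ' * (m ^ ρ * x ^ (1 - ρ') * y ^ ρ') ^ k := by
  have hy : 0 ≤ y := hx.le.trans hxy
  have hms := pow_le_rpow_mul_rpow_pow hm hs
  have hyx := pow_le_rpow_mul_rpow_pow ((one_le_div hx).2 hxy) hl
  calc m ^ s * (x ^ k * (y / x) ^ l)
      ≤ m ^ κ * (m ^ ρ) ^ k * (x ^ k * ((y / x) ^ κ' * ((y / x) ^ ρ') ^ k)) := by gcongr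
    _ = m ^ κ * (y / x) ^ κ' * (m ^ ρ * (x * (y / x) ^ ρ')) ^ k := by ring
    _ = m ^ κ * (y / x) ^ κ' * (m ^ ρ * x ^ (1 - ρ') * y ^ ρ') ^ k := by
      rw [mul_div_rpow_eq_rpow_one_sub_mul_rpow hx hy, mul_assoc (m ^ ρ)]

theorem stmt3_general {θ : ℕ → ℕ} (hθ : ∀ k, θ k = 0 ∨ θ k = 1) (hθ0 : θ 0 = 0)
    {μ₀ μ₁ ω₀ ω₁ T κF ρF κs ρs : ℝ} (hμ₁ : 1 ≤ μ₁) (hμ : 1 ≤ μ₀ * μ₁) (hω₀ : 0 < ω₀)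
    (hω : ω₀ ≤ ω₁) (hT : T ≠ 0) {W : ℕ → ℝ} (hW0 : 0 ≤ W 0)
    (hrec_same : ∀ k, θ (k + 1) = θ k →
      W (k + 1) ≤ (if θ k = 0 then ω₀ else ω₁) * W k)
    (hrec_switch : ∀ k, θ (k + 1) ≠ θ k →
      W (k + 1) ≤ (if θ k = 0 then μ₀ else μ₁) * (if θ k = 0 then ω₀ else ω₁) * W k)
    {k : ℕ} (hS : (switchCount θ k : ℝ) ≤ κF + ρF * (k * T))
    (hχ : (lossCount θ k : ℝ) ≤ (κs + ρs * (k * T)) / T) :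
    W k ≤ ((μ₀ * μ₁) ^ κF * (ω₁ / ω₀) ^ (κs / T)) *
      ((μ₀ * μ₁) ^ (ρF * T) * ω₀ ^ (1 - ρs) * ω₁ ^ ρs) ^ k * W 0 := by
  have hμ₀ : 0 ≤ μ₀ := nonneg_of_mul_nonneg_left (zero_le_one.trans hμ) (zero_lt_one.trans_le hμ₁)
  have hstep : ∀ j, W (j + 1) ≤ stepGain θ μ₀ μ₁ ω₀ ω₁ j * W j := fun j => by
    by_cases h : θ (j + 1) = θ j
    · simpa only [stepGain, if_pos h, one_mul] using hrec_same j h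
    · simpa only [stepGain, if_neg h] using hrec_switch j h
  have hS' : (switchCount θ k : ℝ) ≤ κF + ρF * T * k := hS.trans_eq (by ring)
  have hχ' : (lossCount θ k : ℝ) ≤ κs / T + ρs * k := hχ.trans_eq (by field_simp)
  have hcount :=
    le_pow_switchCount_mul_pow_lossCount hθ hθ0 hμ₀ hμ₁ hω₀ (hω₀.le.trans hω) hW0 hstep k
  exact hcount.trans <|
    mul_le_mul_of_nonneg_right (pow_mul_pow_le_mul_rpow_pow hμ hω₀ hω hS' hχ') hW0

/-- geometric bound for the switched Lyapunov-like sequence under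
averagely constrained DoS attacks. -/
theorem stmt3 (θ : ℕ → ℕ) (hθ : ∀ k, θ k = 0 ∨ θ k = 1) (hθ0 : θ 0 = 0)
    (μ₀ μ₁ ω₀ ω₁ T κF ρF κs ρs : ℝ)
    (hμ₀ : 1 ≤ μ₀) (hμ₁ : 1 ≤ μ₁) (hω₀ : 0 < ω₀) (hω₀1 : ω₀ < 1) (hω₁ : 1 ≤ ω₁)
    (hT : 0 < T) (hκF : 0 ≤ κF) (hρF : 0 ≤ ρF) (hκs : 0 ≤ κs) (hρs : 0 ≤ ρs)
    (W : ℕ → ℝ) (hWnonneg : ∀ k, 0 ≤ W k)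
    (hrec_same : ∀ k, θ (k + 1) = θ k →
      W (k + 1) ≤ (if θ k = 0 then ω₀ else ω₁) * W k)
    (hrec_switch : ∀ k, θ (k + 1) ≠ θ k →
      W (k + 1) ≤ (if θ k = 0 then μ₀ else μ₁) * (if θ k = 0 then ω₀ else ω₁) * W k)
    (hS : ∀ k : ℕ, (switchCount θ k : ℝ) ≤ κF + ρF * (k * T))
    (hχ : ∀ k : ℕ, (lossCount θ k : ℝ) ≤ (κs + ρs * (k * T)) / T) :
    ∀ k : ℕ, W k ≤ ((μ₀ * μ₁) ^ κF * (ω₁ / ω₀) ^ (κs / T)) *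
      ((μ₀ * μ₁) ^ (ρF * T) * ω₀ ^ (1 - ρs) * ω₁ ^ ρs) ^ k * W 0 := fun _ =>
  stmt3_general hθ hθ0 hμ₁ (one_le_mul_of_one_le_of_one_le hμ₀ hμ₁) hω₀ (hω₀1.le.trans hω₁)
    hT.ne' (hWnonneg 0) hrec_same hrec_switch (hS _) (hχ _)
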